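/- Define S(ω) := C_I + T⁻¹·D_I + Ĉᵀ∘(Cα − iωDα)⁻¹∘(T⁻¹·Dα − Cα)∘(Cα + iωDα)⁻¹∘Ĉ. Then S(ω) admits the alternative representation S(ω) = Cε^S + T⁻¹·D_I + Ĉᵀ∘(Cα − iωDα)⁻¹∘(T⁻¹·Dα + ω²·Dα∘Cα⁻¹∘Dα)∘(Cα + iωDα)⁻¹∘Ĉ. Consequently S(ω) is Hermitian (self-adjoint with respect to the Hermitian inner product on the complexification of V), and if in addition Cε^S is positive definite and D_I is positive semidefinite, then S(ω) is Hermitian positive definite. -/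

import Mathlib

open scoped ComplexInnerProductSpace

section Defs

variable {V : Type*} [NormedAddCommGroup V] [InnerProductSpace ℂ V] [FiniteDimensional ℂ V]

/-- `Ĉ := Cm − Cα ∘ Dα⁻¹ ∘ Dm`. -/
noncomputable def Chat (Cα Cm Dα Dm : V →L[ℂ] V) : V →L[ℂ] V :=
  Cm - Cα ∘L Ring.inverse Dα ∘L Dm

/-- The Schur complement `Cε^S := Cε − Cm ∘ Cα⁻¹ ∘ Cm`. -/
noncomputable def CSchur (Cε Cα Cm : V →L[ℂ] V) : V →L[ℂ] V :=
  Cε - Cm ∘L Ring.inverse Cα ∘L Cm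

/-- The instantaneous viscosity tensor `D_I := Dε − Dm∘Dα⁻¹∘Dm`. -/
noncomputable def DInst (Dε Dα Dm : V →L[ℂ] V) : V →L[ℂ] V :=
  Dε - Dm ∘L Ring.inverse Dα ∘L Dm

/-- The instantaneous elasticity tensor `C_I := Cε^S + Ĉᵀ∘Cα⁻¹∘Ĉ`. -/
noncomputable def CInst (Cε Cα Cm Dα Dm : V →L[ℂ] V) : V →L[ℂ] V :=
  CSchur Cε Cα Cm +
    ContinuousLinearMap.adjoint (Chat Cα Cm Dα Dm) ∘L Ring.inverse Cα ∘L Chat Cα Cm Dα Dm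

/-- `S(ω) := C_I + T⁻¹·D_I + Ĉᵀ∘(Cα − iωDα)⁻¹∘(T⁻¹·Dα − Cα)∘(Cα + iωDα)⁻¹∘Ĉ`. -/
noncomputable def Sfreq (Cε Cα Cm Dε Dα Dm : V →L[ℂ] V) (T ω : ℝ) : V →L[ℂ] V :=
  CInst Cε Cα Cm Dα Dm + ((T : ℂ)⁻¹) • DInst Dε Dα Dm +
    ContinuousLinearMap.adjoint (Chat Cα Cm Dα Dm) ∘L
      Ring.inverse (Cα - (Complex.I * (ω : ℂ)) • Dα) ∘L
        (((T : ℂ)⁻¹) • Dα - Cα) ∘L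
          Ring.inverse (Cα + (Complex.I * (ω : ℂ)) • Dα) ∘L Chat Cα Cm Dα Dm

end Defs

/-!
For `b` skew-adjoint and `a` invertible, `(a - b) a⁻¹ (a + b) = a - b a⁻¹ b = a + b⋆ a⁻¹ b`. If `a`
is strictly positive, so is the right-hand side, which makes `a ± b` invertible; multiplying by
their inverses then gives `a⁻¹ = (a - b)⁻¹ (a - b a⁻¹ b) (a + b)⁻¹`. Substituting this for `Cα⁻¹` in
`C_I`, with `b = iωDα`, cancels the `-Cα` in the middle factor of `S(ω)`. What remains is
`Cε^S + T⁻¹ D_I` plus a congruence of the nonnegative operator `T⁻¹ Dα + ω² Dα Cα⁻¹ Dα`.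
-/

open scoped Ring ComplexOrder

section Ring

variable {R : Type*} [Ring R] {a b : R}

theorem sub_mul_ringInverse_mul_add (ha : IsUnit a) (b : R) :
    (a - b) * a⁻¹ʳ * (a + b) = a - b * a⁻¹ʳ * b := by
  rw [sub_mul, Ring.mul_inverse_cancel a ha, sub_mul, one_mul, mul_add,
    Ring.inverse_mul_cancel_right _ _ ha]
  abel

theorem isUnit_add_of_isUnit_sub_mul_ringInverse_mul (ha : IsUnit a)
    (h : IsUnit (a - b * a⁻¹ʳ * b)) : IsUnit (a + b) := by
  have hleft : (a - b) * a⁻¹ʳ * (a + b) = a - b * a⁻¹ʳ * b := sub_mul_ringInverse_mul_add ha b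
  have hright : (a + b) * a⁻¹ʳ * (a - b) = a - b * a⁻¹ʳ * b := by
    simpa [← sub_eq_add_neg] using sub_mul_ringInverse_mul_add ha (-b)
  refine isUnit_iff_exists_and_exists.2
    ⟨⟨a⁻¹ʳ * (a - b) * (a - b * a⁻¹ʳ * b)⁻¹ʳ, ?_⟩,
      ⟨(a - b * a⁻¹ʳ * b)⁻¹ʳ * ((a - b) * a⁻¹ʳ), ?_⟩⟩
  · rw [← mul_assoc, ← mul_assoc, hright, Ring.mul_inverse_cancel _ h]
  · rw [mul_assoc, hleft, Ring.inverse_mul_cancel _ h]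

theorem ringInverse_add_mul_sub_mul (ha : IsUnit a) (hsub : IsUnit (a - b)) (hadd : IsUnit (a + b))
    (m : R) :
    a⁻¹ʳ + (a - b)⁻¹ʳ * (m - a) * (a + b)⁻¹ʳ =
      (a - b)⁻¹ʳ * (m - b * a⁻¹ʳ * b) * (a + b)⁻¹ʳ := by
  have hinv : a⁻¹ʳ = (a - b)⁻¹ʳ * (a - b * a⁻¹ʳ * b) * (a + b)⁻¹ʳ := by
    rw [← sub_mul_ringInverse_mul_add ha, ← mul_assoc, Ring.inverse_mul_cancel_left _ _ hsub,
      Ring.mul_inverse_cancel_right _ _ hadd]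
  nth_rw 1 [hinv]
  rw [← add_mul, ← mul_add, add_comm, sub_add_sub_cancel]

end Ring

section StarRing

variable {R : Type*} [Ring R] [StarRing R] {a b k m : R}

theorem star_ringInverse_add (ha : IsSelfAdjoint a) (hb : b ∈ skewAdjoint R) :
    star (a + b)⁻¹ʳ = (a - b)⁻¹ʳ := by
  rw [← Ring.inverse_star, star_add, ha.star_eq, skewAdjoint.mem_iff.1 hb, sub_eq_add_neg]

theorem isSelfAdjoint_ringInverse_sub_mul_mul_ringInverse_add (ha : IsSelfAdjoint a)
    (hb : b ∈ skewAdjoint R) (hm : IsSelfAdjoint m) :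
    IsSelfAdjoint ((a - b)⁻¹ʳ * m * (a + b)⁻¹ʳ) := by
  rw [← star_ringInverse_add ha hb]
  exact hm.conjugate' _

theorem isSelfAdjoint_sub_mul_ringInverse_mul (ha : IsSelfAdjoint a) (hk : IsSelfAdjoint k)
    (hm : IsSelfAdjoint m) : IsSelfAdjoint (k - m * a⁻¹ʳ * m) :=
  hk.sub (ha.ringInverse.conjugate_self hm)

theorem neg_mul_mul_nonneg_of_mem_skewAdjoint [PartialOrder R] [StarOrderedRing R]
    (hb : b ∈ skewAdjoint R) (hk : 0 ≤ k) : 0 ≤ -(b * k * b) := by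
  simpa [skewAdjoint.mem_iff.1 hb] using star_left_conjugate_nonneg hk b

end StarRing

section CStarAlgebra

variable {A : Type*} [CStarAlgebra A] [PartialOrder A] [StarOrderedRing A] {a b : A}

theorem isUnit_add_of_isStrictlyPositive_of_mem_skewAdjoint (ha : IsStrictlyPositive a)
    (hb : b ∈ skewAdjoint A) : IsUnit (a + b) := by
  have hpos : IsStrictlyPositive (a - b * a⁻¹ʳ * b) := by
    rw [sub_eq_add_neg]
    exact ha.add_nonneg (neg_mul_mul_nonneg_of_mem_skewAdjoint hb ha.ringInverse.nonneg)
  exact isUnit_add_of_isUnit_sub_mul_ringInverse_mul ha.isUnit hpos.isUnit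

theorem ringInverse_add_mul_sub_mul_of_isStrictlyPositive (ha : IsStrictlyPositive a)
    (hb : b ∈ skewAdjoint A) (m : A) :
    a⁻¹ʳ + (a - b)⁻¹ʳ * (m - a) * (a + b)⁻¹ʳ =
      (a - b)⁻¹ʳ * (m - b * a⁻¹ʳ * b) * (a + b)⁻¹ʳ := by
  refine ringInverse_add_mul_sub_mul ha.isUnit ?_
    (isUnit_add_of_isStrictlyPositive_of_mem_skewAdjoint ha hb) m
  rw [sub_eq_add_neg]
  exact isUnit_add_of_isStrictlyPositive_of_mem_skewAdjoint ha (neg_mem hb)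

theorem ringInverse_add_mul_sub_mul_nonneg (ha : IsStrictlyPositive a) (hb : b ∈ skewAdjoint A)
    {m : A} (hm : 0 ≤ m) : 0 ≤ a⁻¹ʳ + (a - b)⁻¹ʳ * (m - a) * (a + b)⁻¹ʳ := by
  rw [ringInverse_add_mul_sub_mul_of_isStrictlyPositive ha hb,
    ← star_ringInverse_add ha.isSelfAdjoint hb, sub_eq_add_neg]
  exact star_left_conjugate_nonneg
    (add_nonneg hm (neg_mul_mul_nonneg_of_mem_skewAdjoint hb ha.ringInverse.nonneg)) _

end CStarAlgebra

section DynamicStiffness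

/-- The symbol `S(ω)` in an arbitrary complex algebra with involution: `s`, `e`, `a`, `d`, `c`, `t`
stand for `Cε^S`, `D_I`, `Cα`, `Dα`, `Ĉ`, `T⁻¹`. The parameters `s`, `e`, `c` are free because
`S(ω)` depends on `Cε`, `Cm`, `Dε`, `Dm` only through them. -/
noncomputable def dynamicStiffness {A : Type*} [Ring A] [Star A] [SMul ℂ A] (s e a d c : A)
    (t : ℂ) (ω : ℝ) : A :=
  s + star c * a⁻¹ʳ * c + t • e +
    star c * (a - (Complex.I * ω) • d)⁻¹ʳ * (t • d - a) * (a + (Complex.I * ω) • d)⁻¹ʳ * c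

theorem dynamicStiffness_eq_add_conjugate {A : Type*} [Ring A] [Star A] [SMul ℂ A]
    (s e a d c : A) (t : ℂ) (ω : ℝ) :
    dynamicStiffness s e a d c t ω =
      s + t • e + star c * (a⁻¹ʳ + (a - (Complex.I * ω) • d)⁻¹ʳ * (t • d - a) *
        (a + (Complex.I * ω) • d)⁻¹ʳ) * c := by
  simp only [dynamicStiffness, mul_add, add_mul, mul_assoc]
  abel

theorem I_mul_smul_mem_skewAdjoint {A : Type*} [Ring A] [StarRing A] [Module ℂ A] [StarModule ℂ A]
    {d : A} (hd : IsSelfAdjoint d) (ω : ℝ) : (Complex.I * ω) • d ∈ skewAdjoint A :=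
  hd.smul_mem_skewAdjoint (by simp [skewAdjoint.mem_iff])

theorem isSelfAdjoint_dynamicStiffness {A : Type*} [Ring A] [StarRing A] [Module ℂ A]
    [StarModule ℂ A] {s e a d : A} (hs : IsSelfAdjoint s) (he : IsSelfAdjoint e)
    (ha : IsSelfAdjoint a) (hd : IsSelfAdjoint d) (c : A) {t : ℂ} (ht : IsSelfAdjoint t) (ω : ℝ) :
    IsSelfAdjoint (dynamicStiffness s e a d c t ω) := by
  rw [dynamicStiffness_eq_add_conjugate]
  exact (hs.add (ht.smul he)).add <| (ha.ringInverse.add <|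
    isSelfAdjoint_ringInverse_sub_mul_mul_ringInverse_add ha (I_mul_smul_mem_skewAdjoint hd ω)
      ((ht.smul hd).sub ha)).conjugate' c

variable {A : Type*} [CStarAlgebra A] [PartialOrder A] [StarOrderedRing A] {s e a d : A}

theorem dynamicStiffness_eq_add_sq_smul (ha : IsStrictlyPositive a) (hd : IsSelfAdjoint d)
    (s e c : A) (t : ℂ) (ω : ℝ) :
    dynamicStiffness s e a d c t ω =
      s + t • e + star c * (a - (Complex.I * ω) • d)⁻¹ʳ *
        (t • d + (ω : ℂ) ^ 2 • (d * a⁻¹ʳ * d)) * (a + (Complex.I * ω) • d)⁻¹ʳ * c := by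
  have hsq : ((Complex.I * ω) • d) * a⁻¹ʳ * ((Complex.I * ω) • d) =
      -((ω : ℂ) ^ 2 • (d * a⁻¹ʳ * d)) := by
    rw [smul_mul_assoc, smul_mul_smul_comm, ← sq, mul_pow, Complex.I_sq, neg_one_mul, neg_smul]
  rw [dynamicStiffness_eq_add_conjugate, ringInverse_add_mul_sub_mul_of_isStrictlyPositive ha
    (I_mul_smul_mem_skewAdjoint hd ω), hsq, sub_neg_eq_add]
  simp only [mul_assoc]

theorem isStrictlyPositive_dynamicStiffness (hs : IsStrictlyPositive s) (he : 0 ≤ e)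
    (ha : IsStrictlyPositive a) (hd : 0 ≤ d) (c : A) {t : ℂ} (ht : 0 ≤ t) (ω : ℝ) :
    IsStrictlyPositive (dynamicStiffness s e a d c t ω) := by
  rw [dynamicStiffness_eq_add_conjugate]
  exact (hs.add_nonneg (smul_nonneg ht he)).add_nonneg <| star_left_conjugate_nonneg
    (ringInverse_add_mul_sub_mul_nonneg ha (I_mul_smul_mem_skewAdjoint (.of_nonneg hd) ω)
      (smul_nonneg ht hd)) c

theorem stmt14_general (hs : IsSelfAdjoint s) (he : IsSelfAdjoint e) (ha : IsStrictlyPositive a)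
    (hd : 0 ≤ d) (c : A) {t : ℂ} (ht : 0 ≤ t) (ω : ℝ) :
    dynamicStiffness s e a d c t ω =
        s + t • e + star c * (a - (Complex.I * ω) • d)⁻¹ʳ *
          (t • d + (ω : ℂ) ^ 2 • (d * a⁻¹ʳ * d)) * (a + (Complex.I * ω) • d)⁻¹ʳ * c ∧
      IsSelfAdjoint (dynamicStiffness s e a d c t ω) ∧
      (IsStrictlyPositive s → 0 ≤ e → IsStrictlyPositive (dynamicStiffness s e a d c t ω)) :=
  ⟨dynamicStiffness_eq_add_sq_smul ha (.of_nonneg hd) s e c t ω,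
    isSelfAdjoint_dynamicStiffness hs he ha.isSelfAdjoint (.of_nonneg hd) c (.of_nonneg ht) ω,
    fun hspos hepos => isStrictlyPositive_dynamicStiffness hspos hepos ha hd c ht ω⟩

end DynamicStiffness

section Operator

variable {𝕜 E : Type*} [RCLike 𝕜] [NormedAddCommGroup E] [InnerProductSpace 𝕜 E]

theorem nonneg_iff_re_inner_nonneg [CompleteSpace E] {A : E →L[𝕜] E} (hA : IsSelfAdjoint A) :
    0 ≤ A ↔ ∀ x, 0 ≤ RCLike.re (inner 𝕜 (A x) x) := by
  rw [ContinuousLinearMap.nonneg_iff_isPositive, ContinuousLinearMap.isPositive_def']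
  exact and_iff_right hA

theorem isUnit_of_re_inner_pos [FiniteDimensional 𝕜 E] {A : E →L[𝕜] E}
    (hA : ∀ x, x ≠ 0 → 0 < RCLike.re (inner 𝕜 (A x) x)) : IsUnit A := by
  have hinj : Function.Injective A := by
    refine (injective_iff_map_eq_zero A).2 fun x hx => ?_
    by_contra hne
    simpa [hx] using hA x hne
  have : CompleteSpace E := FiniteDimensional.complete 𝕜 E
  exact ContinuousLinearMap.isUnit_iff_bijective.2
    ⟨hinj, (LinearMap.injective_iff_surjective (f := A.toLinearMap)).1 hinj⟩

variable {V : Type*} [NormedAddCommGroup V] [InnerProductSpace ℂ V]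

theorem re_inner_pos_of_isStrictlyPositive [CompleteSpace V] {A : V →L[ℂ] V}
    (hA : IsStrictlyPositive A) {x : V} (hx : x ≠ 0) : 0 < (⟪A x, x⟫).re := by
  obtain ⟨B, hB, rfl⟩ := CStarAlgebra.isStrictlyPositive_iff_eq_star_mul_self.1 hA
  have hBx : B x ≠ 0 :=
    (map_ne_zero_iff B (ContinuousLinearMap.isUnit_iff_bijective.1 hB).injective).2 hx
  have hinner : ⟪(star B * B) x, x⟫ = ⟪B x, B x⟫ := B.adjoint_inner_left x (B x)
  rw [hinner]
  exact (re_inner_self_pos (𝕜 := ℂ)).2 hBx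

theorem isStrictlyPositive_iff_re_inner_pos [FiniteDimensional ℂ V] {A : V →L[ℂ] V}
    (hA : IsSelfAdjoint A) : IsStrictlyPositive A ↔ ∀ x, x ≠ 0 → 0 < (⟪A x, x⟫).re := by
  refine ⟨fun h x => re_inner_pos_of_isStrictlyPositive h, fun h => ?_⟩
  refine (isUnit_of_re_inner_pos h).isStrictlyPositive
    ((nonneg_iff_re_inner_nonneg hA).2 fun x => ?_)
  obtain rfl | hx := eq_or_ne x 0
  · simp
  · exact (h x hx).le

theorem Sfreq_eq_dynamicStiffness [FiniteDimensional ℂ V] (Cε Cα Cm Dε Dα Dm : V →L[ℂ] V)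
    (T ω : ℝ) :
    Sfreq Cε Cα Cm Dε Dα Dm T ω =
      dynamicStiffness (CSchur Cε Cα Cm) (DInst Dε Dα Dm) Cα Dα (Chat Cα Cm Dα Dm) (T : ℂ)⁻¹ ω :=
  rfl

end Operator

theorem stmt14 {V : Type*} [NormedAddCommGroup V] [InnerProductSpace ℂ V]
    [FiniteDimensional ℂ V]
    (Cε Cα Cm Dε Dα Dm : V →L[ℂ] V)
    (hCε : IsSelfAdjoint Cε) (hCα : IsSelfAdjoint Cα) (hCm : IsSelfAdjoint Cm)
    (hDε : IsSelfAdjoint Dε) (hDα : IsSelfAdjoint Dα) (hDm : IsSelfAdjoint Dm)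
    (hCαpos : ∀ x : V, x ≠ 0 → 0 < (⟪Cα x, x⟫).re)
    (hDαpos : ∀ x : V, x ≠ 0 → 0 < (⟪Dα x, x⟫).re)
    (T : ℝ) (hT : 0 < T) (ω : ℝ) :
    Sfreq Cε Cα Cm Dε Dα Dm T ω =
        CSchur Cε Cα Cm + ((T : ℂ)⁻¹) • DInst Dε Dα Dm +
          ContinuousLinearMap.adjoint (Chat Cα Cm Dα Dm) ∘L
            Ring.inverse (Cα - (Complex.I * (ω : ℂ)) • Dα) ∘L
              (((T : ℂ)⁻¹) • Dα + ((ω : ℂ) ^ 2) • (Dα ∘L Ring.inverse Cα ∘L Dα)) ∘L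
                Ring.inverse (Cα + (Complex.I * (ω : ℂ)) • Dα) ∘L Chat Cα Cm Dα Dm ∧
      IsSelfAdjoint (Sfreq Cε Cα Cm Dε Dα Dm T ω) ∧
      ((∀ x : V, x ≠ 0 → 0 < (⟪CSchur Cε Cα Cm x, x⟫).re) →
        (∀ x : V, 0 ≤ (⟪DInst Dε Dα Dm x, x⟫).re) →
        ∀ x : V, x ≠ 0 → 0 < (⟪Sfreq Cε Cα Cm Dε Dα Dm T ω x, x⟫).re) := by
  have hS : IsSelfAdjoint (CSchur Cε Cα Cm) := isSelfAdjoint_sub_mul_ringInverse_mul hCα hCε hCm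
  have hD : IsSelfAdjoint (DInst Dε Dα Dm) := isSelfAdjoint_sub_mul_ringInverse_mul hDα hDε hDm
  have hCαstrict : IsStrictlyPositive Cα := (isStrictlyPositive_iff_re_inner_pos hCα).2 hCαpos
  have hDαstrict : IsStrictlyPositive Dα := (isStrictlyPositive_iff_re_inner_pos hDα).2 hDαpos
  have hTinv : 0 ≤ (T : ℂ)⁻¹ := by exact_mod_cast inv_nonneg.2 hT.le
  obtain ⟨hrepr, hself, hpos⟩ :=
    stmt14_general hS hD hCαstrict hDαstrict.nonneg (Chat Cα Cm Dα Dm) hTinv ω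
  rw [isStrictlyPositive_iff_re_inner_pos hS, nonneg_iff_re_inner_nonneg hD,
    isStrictlyPositive_iff_re_inner_pos hself] at hpos
  rw [Sfreq_eq_dynamicStiffness]
  exact ⟨hrepr, hself, hpos⟩
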